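/- arXiv:1503.07143 — 5 statements merged into one kernel-verified Lean document; each statement's English description precedes it below -/
import Mathlib

section
/- Suppose the N agents evolve according to ẋ_i(t) = −Σ_{j∈N_i} r(‖x_i(t)−x_j(t)‖)(x_i(t)−x_j(t)) + v_i(t) on an interval [0,T), where r satisfies Property (P), each free input v_i : [0,T) → ℝⁿ satisfies ‖v_i(t)‖ ≤ δ for all t, the constant δ > 0 satisfies δ ≤ (1/K)·r(0)²·s/r(s) for every s ≥ R̃, the constants 0 < R̃ < R satisfy M·P(R̃) ≤ P(R), and initially ‖x_i(0)−x_j(0)‖ ≤ R̃ for every edge {i,j} ∈ E. Then connectivity is maintained: ‖x_i(t)−x_j(t)‖ ≤ R for every edge {i,j} ∈ E and every t ∈ [0,T). -/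
/-!
Write `g i = ∑ⱼ aᵢⱼ (x i - x j)` with `aᵢⱼ = r(‖x i - x j‖)` on edges and `0` elsewhere, so that
the dynamics read `ẋ i = -g i + v i`. The function `W = ∑ᵢⱼ P(‖x i - x j‖)`, summed over adjacent
ordered pairs (twice the total edge potential), has derivative `2 ∑ᵢ ⟪g i, -g i + v i⟫` by summation
by parts (`sum_by_parts`). This is nonpositive as soon as `∑ ‖g i‖² ≥ N δ²` (`dissipation`).

If some edge has length `m > R'`, then `∑ ‖g i‖² ≥ (r(0) λ₂ m)² / 2` (`gradient_lower`): the weighted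
Laplacian dominates `r(0) L`, and `L` is at least `λ₂` on mean-zero configurations
(`poincare_vec`, which rests on the spectral bound `lambda2_le_quadForm`). The hypothesis on `δ` at
`s = m`, with `λ₂ ≤ N` and `λ₂ ≤ |Dᵀ|²`, makes this at least `N δ²` (`delta_bound`).

Initially `W ≤ 2 M P(R')`, and whenever `W > 2 M P(R')` some edge is longer than `R'`, so `W` does
not increase; hence `W ≤ 2 M P(R') ≤ 2 P(R)` throughout (`barrier`). Each edge contributes twice
its potential to `W`, so `P(‖x i - x j‖) ≤ P(R)`, and `P` is strictly increasing.
-/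

open scoped BigOperators
open Matrix

/-- Induced Euclidean (spectral) norm of a real matrix. -/
noncomputable def opNorm {m k : ℕ} (A : Matrix (Fin m) (Fin k) ℝ) : ℝ :=
  ‖LinearMap.toContinuousLinearMap (Matrix.toEuclideanLin A)‖

/-- The second-smallest eigenvalue (counted with multiplicity) of a real symmetric matrix. -/
noncomputable def lambda2 {N : ℕ} (A : Matrix (Fin N) (Fin N) ℝ) : ℝ :=
  if h : A.IsHermitian then (List.insertionSort (· ≤ ·) (List.ofFn h.eigenvalues)).getD 1 0 else 0

/-- Oriented incidence matrix determined by tail/head maps `tl hd : Fin M → Fin N`: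
column `l` has `+1` at the head `hd l` and `-1` at the tail `tl l`. -/
def incMat {N M : ℕ} (tl hd : Fin M → Fin N) : Matrix (Fin N) (Fin M) ℝ :=
  Matrix.of fun k l => if k = hd l then 1 else if k = tl l then -1 else 0

/-- `K = 2 √(N(N-1)) |D(G)ᵀ| / λ₂(G)²`. -/
noncomputable def Kconst {N M : ℕ} (tl hd : Fin M → Fin N) : ℝ :=
  2 * Real.sqrt ((N : ℝ) * ((N : ℝ) - 1)) * opNorm (incMat tl hd)ᵀ /
    (lambda2 (incMat tl hd * (incMat tl hd)ᵀ)) ^ 2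

/-- `P(ρ) = ∫₀^ρ r(s) s ds`. -/
noncomputable def Pfun (r : ℝ → ℝ) (ρ : ℝ) : ℝ := ∫ s in (0:ℝ)..ρ, r s * s

/-! ### The second-smallest eigenvalue -/

/-- At most one index carries an eigenvalue strictly below the second entry of the sorted list. -/
lemma second_sorted_le {N : ℕ} (hN : 2 ≤ N) (f : Fin N → ℝ) {i j : Fin N} (hij : i ≠ j)
    (hi : f i < (List.insertionSort (· ≤ ·) (List.ofFn f)).getD 1 0) :
    (List.insertionSort (· ≤ ·) (List.ofFn f)).getD 1 0 ≤ f j := by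
  by_contra! hj
  have hperm := List.perm_insertionSort (· ≤ ·) (List.ofFn f)
  have hsort := List.pairwise_insertionSort (· ≤ ·) (List.ofFn f)
  have hlen : (List.insertionSort (· ≤ ·) (List.ofFn f)).length = N := by simp
  generalize List.insertionSort (· ≤ ·) (List.ofFn f) = l at *
  match l, hlen with
  | [], h => simp at h; omega
  | [_], h => simp at h; omega
  | a :: b :: t, _ =>
    simp only [List.getD_cons_succ, List.getD_cons_zero] at hi hj
    have h1 : (a :: b :: t).countP (fun z => decide (z < b)) ≤ 1 := by
      have ht : t.countP (fun z => decide (z < b)) = 0 := by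
        rw [List.countP_eq_zero]
        intro z hz
        have := hsort.of_cons
        rw [List.pairwise_cons] at this
        simpa using this.1 z hz
      rw [List.countP_cons, List.countP_cons, ht]
      simp only [lt_self_iff_false, decide_false]
      split_ifs <;> simp_all
    have h2 : 2 ≤ (List.ofFn f).countP (fun z => decide (z < b)) := by
      have e : (List.ofFn f).countP (fun z => decide (z < b))
          = Multiset.countP (fun z => z < b) (List.ofFn f : Multiset ℝ) := by
        rw [Multiset.coe_countP]
      rw [e, ← Fin.univ_val_map, Multiset.countP_map]
      have : ({i, j} : Finset (Fin N)).card ≤ (Finset.univ.filter (fun k => f k < b)).card := by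
        apply Finset.card_le_card
        intro k hk
        simp only [Finset.mem_insert, Finset.mem_singleton] at hk
        rcases hk with rfl | rfl <;> simp [hi, hj]
      rw [Finset.card_pair hij] at this
      exact this
    rw [hperm.countP_eq] at h1
    omega

lemma lambda2_nonneg {N : ℕ} (hN : 2 ≤ N) {A : Matrix (Fin N) (Fin N) ℝ} (hA : A.PosSemidef) :
    0 ≤ lambda2 A := by
  unfold lambda2
  rw [dif_pos hA.1]
  by_contra! h
  have h01 : (⟨0, by omega⟩ : Fin N) ≠ ⟨1, by omega⟩ := by simp
  rw [List.getD_eq_getElem _ _ (by simp; omega)] at h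
  have hmem := List.getElem_mem (l := List.insertionSort (· ≤ ·) (List.ofFn hA.1.eigenvalues))
    (n := 1) (by simp; omega)
  rw [List.mem_insertionSort, List.mem_ofFn] at hmem
  obtain ⟨k, hk⟩ := hmem
  exact absurd (hA.eigenvalues_nonneg k) (by rw [hk]; exact not_le.mpr h)

/-- Courant–Fischer lower bound: on the orthogonal complement of a kernel vector `u`, a positive
semidefinite matrix is bounded below by its second-smallest eigenvalue. -/
lemma lambda2_le_quadForm {N : ℕ} (hN : 2 ≤ N) {A : Matrix (Fin N) (Fin N) ℝ}
    (hA : A.PosSemidef) {u : Fin N → ℝ} (hu : u ≠ 0) (hAu : A *ᵥ u = 0) (y : Fin N → ℝ)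
    (hy : y ⬝ᵥ u = 0) : lambda2 A * (y ⬝ᵥ y) ≤ y ⬝ᵥ (A *ᵥ y) := by
  have hA' := hA.1
  set b := hA'.eigenvectorBasis with hb
  -- coordinates in the eigenbasis
  let c : (Fin N → ℝ) → Fin N → ℝ := fun z k => inner ℝ (b k) (WithLp.toLp 2 z)
  have hdot : ∀ z w : Fin N → ℝ, z ⬝ᵥ w = ∑ k, c z k * c w k := by
    intro z w
    have := b.sum_inner_mul_inner (WithLp.toLp 2 z) (WithLp.toLp 2 w)
    have e : inner ℝ (WithLp.toLp 2 z) (WithLp.toLp 2 w) = z ⬝ᵥ w := by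
      rw [EuclideanSpace.inner_toLp_toLp]; simp [dotProduct_comm]
    rw [← e, ← this]
    refine Finset.sum_congr rfl fun k _ => ?_
    rw [real_inner_comm]
  have hcA : ∀ z k, c (A *ᵥ z) k = hA'.eigenvalues k * c z k := by
    intro z k
    have h1 := hA'.mulVec_eigenvectorBasis k
    have e : ∀ w : Fin N → ℝ, c w k = (b k).ofLp ⬝ᵥ w := by
      intro w
      show inner ℝ (b k) (WithLp.toLp 2 w) = _
      rw [EuclideanSpace.inner_eq_star_dotProduct]; simp [dotProduct_comm]
    rw [e, e, dotProduct_mulVec, ← mulVec_transpose]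
    have ht : Aᵀ = A := by
      rw [← conjTranspose_eq_transpose_of_trivial]; exact hA'
    rw [ht, hb, h1]; simp
  rw [hdot y y, hdot y, Finset.mul_sum]
  refine Finset.sum_le_sum fun k _ => ?_
  rw [hcA]
  by_cases hk : lambda2 A ≤ hA'.eigenvalues k
  · nlinarith [mul_self_nonneg (c y k)]
  · -- `k` is then the only index below `lambda2 A`, so `u` is a multiple of `b k`
    have hcu : ∀ j, j ≠ k → c u j = 0 := by
      intro j hj
      have hlt : hA'.eigenvalues k < lambda2 A := not_le.mp hk
      have hj2 : lambda2 A ≤ hA'.eigenvalues j := by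
        unfold lambda2 at hlt ⊢
        rw [dif_pos hA'] at hlt ⊢
        exact second_sorted_le hN _ hj.symm hlt
      have hpos : 0 < hA'.eigenvalues j :=
        lt_of_lt_of_le (lt_of_le_of_lt (hA.eigenvalues_nonneg k) hlt) hj2
      have h0 := hcA u j
      rw [hAu] at h0
      have : c 0 j = 0 := by simp [c]
      rw [this] at h0
      exact (mul_eq_zero.mp h0.symm).resolve_left hpos.ne'
    have huk : c u k ≠ 0 := by
      intro h
      apply hu
      have : u ⬝ᵥ u = 0 := by
        rw [hdot]
        refine Finset.sum_eq_zero fun j _ => ?_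
        by_cases hj : j = k
        · rw [hj, h, mul_zero]
        · rw [hcu j hj, mul_zero]
      exact dotProduct_self_eq_zero.mp this
    have hyk : c y k = 0 := by
      rw [hdot, Finset.sum_eq_single k (fun j _ hj => by rw [hcu j hj, mul_zero])
        (by simp)] at hy
      exact (mul_eq_zero.mp hy).resolve_right huk
    rw [hyk]; simp

/-! ### Poincaré inequalities on the graph -/

lemma incMat_transpose_mulVec {N M : ℕ} (tl hd : Fin M → Fin N) (hne : ∀ l, tl l ≠ hd l)
    (y : Fin N → ℝ) (l : Fin M) : ((incMat tl hd)ᵀ *ᵥ y) l = y (hd l) - y (tl l) := by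
  have : ∀ k, (if k = hd l then (1:ℝ) else if k = tl l then -1 else 0) * y k
      = (if k = hd l then y k else 0) - (if k = tl l then y k else 0) := by
    intro k
    by_cases h1 : k = hd l
    · have h2 : k ≠ tl l := fun h => hne l (h ▸ h1)
      simp [h1, (hne l).symm]
    · by_cases h2 : k = tl l <;> simp [h2, hne l, h1]
  simp only [mulVec, dotProduct, transpose_apply, incMat, of_apply, this, Finset.sum_sub_distrib,
    Finset.sum_ite_eq', Finset.mem_univ, if_true]

/-- `L = D Dᵀ` has quadratic form `|Dᵀ y|²`. -/
lemma quadForm_eq {N M : ℕ} (D : Matrix (Fin N) (Fin M) ℝ) (y : Fin N → ℝ) :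
    y ⬝ᵥ ((D * Dᵀ) *ᵥ y) = ∑ l, ((Dᵀ *ᵥ y) l) ^ 2 := by
  rw [← mulVec_mulVec, dotProduct_mulVec, ← mulVec_transpose]
  simp [dotProduct, pow_two]

lemma posSemidef_lap {N M : ℕ} (D : Matrix (Fin N) (Fin M) ℝ) : (D * Dᵀ).PosSemidef := by
  have := Matrix.posSemidef_self_mul_conjTranspose D
  rwa [conjTranspose_eq_transpose_of_trivial] at this

/-- Poincaré inequality for scalar functions, as a sum over the oriented edges. -/
lemma poincare_edges {N M : ℕ} (hN : 2 ≤ N) (tl hd : Fin M → Fin N) (hne : ∀ l, tl l ≠ hd l)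
    (y : Fin N → ℝ) (hy : ∑ i, y i = 0) :
    lambda2 (incMat tl hd * (incMat tl hd)ᵀ) * ∑ i, y i ^ 2 ≤ ∑ l, (y (hd l) - y (tl l)) ^ 2 := by
  have hu : (1 : Fin N → ℝ) ≠ 0 := by
    intro h
    exact one_ne_zero (congrFun h ⟨0, by omega⟩)
  have hAu : (incMat tl hd * (incMat tl hd)ᵀ) *ᵥ (1 : Fin N → ℝ) = 0 := by
    rw [← mulVec_mulVec]
    have : (incMat tl hd)ᵀ *ᵥ (1 : Fin N → ℝ) = 0 := by
      ext l
      rw [incMat_transpose_mulVec tl hd hne]; simp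
    rw [this, mulVec_zero]
  have := lambda2_le_quadForm hN (posSemidef_lap (incMat tl hd)) hu hAu y
    (by simpa [dotProduct] using hy)
  rw [quadForm_eq] at this
  simp only [incMat_transpose_mulVec tl hd hne] at this
  simpa [dotProduct, pow_two] using this

/-- The test vector `e₀ - e₁` in `|Dᵀ y|² ≥ λ₂ |y|²`. -/
lemma lambda2_le_opNorm_sq {N M : ℕ} (hN : 2 ≤ N) (tl hd : Fin M → Fin N)
    (hne : ∀ l, tl l ≠ hd l) :
    lambda2 (incMat tl hd * (incMat tl hd)ᵀ) ≤ opNorm (incMat tl hd)ᵀ ^ 2 := by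
  let i0 : Fin N := ⟨0, by omega⟩
  let i1 : Fin N := ⟨1, by omega⟩
  have h01 : i0 ≠ i1 := by simp [i0, i1]
  let y : Fin N → ℝ := Pi.single i0 1 - Pi.single i1 1
  have hy : ∑ i, y i = 0 := by simp [y]
  have hp := poincare_edges hN tl hd hne y hy
  have hle := (LinearMap.toContinuousLinearMap
    (Matrix.toEuclideanLin (incMat tl hd)ᵀ)).le_opNorm (WithLp.toLp 2 y)
  have hsq := pow_le_pow_left₀ (norm_nonneg _) hle 2
  rw [mul_pow, EuclideanSpace.norm_sq_eq, EuclideanSpace.norm_sq_eq] at hsq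
  have e : ∀ l, ((LinearMap.toContinuousLinearMap
      (Matrix.toEuclideanLin (incMat tl hd)ᵀ)) (WithLp.toLp 2 y)) l = y (hd l) - y (tl l) := by
    intro l
    rw [← incMat_transpose_mulVec tl hd hne]
    simp
  simp only [e, Real.norm_eq_abs, sq_abs] at hsq
  have hpos : 0 < ∑ i, y i ^ 2 := by
    apply Finset.sum_pos' (fun i _ => sq_nonneg _) ⟨i0, Finset.mem_univ _, ?_⟩
    simp [y, h01]
  exact le_of_mul_le_mul_right (hp.trans hsq) hpos

/-- Each edge contributes twice to a sum over ordered pairs, so `∑ₑ f(e) ≤ ½ ∑ᵢⱼ aᵢⱼ f(i,j)`. -/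
lemma two_mul_edges_le {N M : ℕ} (G : SimpleGraph (Fin N)) [DecidableRel G.Adj]
    (tl hd : Fin M → Fin N) (hadj : ∀ l, G.Adj (tl l) (hd l))
    (hinj : Function.Injective fun l => s(tl l, hd l))
    (F : Fin N → Fin N → ℝ) (hF : ∀ i j, 0 ≤ F i j) (hsymm : ∀ i j, F i j = F j i) :
    2 * ∑ l, F (hd l) (tl l) ≤ ∑ i, ∑ j, if G.Adj i j then F i j else 0 := by
  let φ : Fin M × Bool → Fin N × Fin N :=
    fun p => if p.2 then (tl p.1, hd p.1) else (hd p.1, tl p.1)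
  have hmk : ∀ p, Sym2.mk (φ p).1 (φ p).2 = s(tl p.1, hd p.1) := by
    rintro ⟨l, b⟩
    cases b <;> simp [φ, Sym2.eq_swap]
  have hφ : Function.Injective φ := by
    rintro ⟨l, b⟩ ⟨l', b'⟩ h
    have hl : l = l' := hinj (by
      have h1 := hmk (l, b)
      have h2 := hmk (l', b')
      rw [h] at h1
      exact h1.symm.trans h2)
    subst hl
    have hn := (hadj l).ne
    cases b <;> cases b' <;> simp_all [φ]
  rw [← Fintype.sum_prod_type' (f := fun i j => if G.Adj i j then F i j else 0)]
  have h1 : 2 * ∑ l, F (hd l) (tl l)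
      = ∑ p : Fin M × Bool, (if G.Adj (φ p).1 (φ p).2 then F (φ p).1 (φ p).2 else 0) := by
    rw [Fintype.sum_prod_type, Finset.mul_sum]
    refine Finset.sum_congr rfl fun l _ => ?_
    simp [φ, hadj l, (hadj l).symm, hsymm (tl l) (hd l)]
    ring
  rw [h1, ← Finset.sum_image (s := Finset.univ) (g := φ)
    (f := fun q : Fin N × Fin N => if G.Adj q.1 q.2 then F q.1 q.2 else 0)
    (fun a _ b _ h => hφ h)]
  refine Finset.sum_le_sum_of_subset_of_nonneg (Finset.subset_univ _) fun q _ _ => ?_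
  split_ifs
  · exact hF _ _
  · exact le_rfl


lemma sum_sum_sq_sub {N : ℕ} (y : Fin N → ℝ) (hy : ∑ i, y i = 0) :
    ∑ i, ∑ j, (y i - y j) ^ 2 = 2 * (N * ∑ i, y i ^ 2) := by
  have h : ∀ i j, (y i - y j) ^ 2 = y i ^ 2 + y j ^ 2 - 2 * y i * y j := fun i j => by ring
  simp only [h, Finset.sum_sub_distrib, Finset.sum_add_distrib, ← Finset.mul_sum, hy,
    Finset.sum_const, Finset.card_univ, Fintype.card_fin, nsmul_eq_mul]
  simp
  ring

/-- `G` is a subgraph of the complete graph, whose Laplacian is `N` on mean-zero vectors. -/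
lemma lambda2_le_card {N M : ℕ} (hN : 2 ≤ N) (G : SimpleGraph (Fin N)) [DecidableRel G.Adj]
    (tl hd : Fin M → Fin N) (hadj : ∀ l, G.Adj (tl l) (hd l))
    (hinj : Function.Injective fun l => s(tl l, hd l)) :
    lambda2 (incMat tl hd * (incMat tl hd)ᵀ) ≤ N := by
  let i0 : Fin N := ⟨0, by omega⟩
  let i1 : Fin N := ⟨1, by omega⟩
  have h01 : i0 ≠ i1 := by simp [i0, i1]
  let y : Fin N → ℝ := Pi.single i0 1 - Pi.single i1 1
  have hy : ∑ i, y i = 0 := by simp [y]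
  have hp := poincare_edges hN tl hd (fun l => (hadj l).ne) y hy
  have h2 := two_mul_edges_le G tl hd hadj hinj (fun i j => (y i - y j) ^ 2)
    (fun i j => sq_nonneg _) (fun i j => by ring)
  have h3 : (∑ i, ∑ j, if G.Adj i j then (y i - y j) ^ 2 else 0) ≤ ∑ i, ∑ j, (y i - y j) ^ 2 := by
    refine Finset.sum_le_sum fun i _ => Finset.sum_le_sum fun j _ => ?_
    split_ifs
    · exact le_rfl
    · exact sq_nonneg _
  rw [sum_sum_sq_sub y hy] at h3
  have hpos : 0 < ∑ i, y i ^ 2 := by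
    apply Finset.sum_pos' (fun i _ => sq_nonneg _) ⟨i0, Finset.mem_univ _, ?_⟩
    simp [y, h01]
  refine le_of_mul_le_mul_right ?_ hpos
  linarith

/-- Poincaré inequality for configurations of agents in `ℝⁿ`, with a sum over ordered pairs. -/
lemma poincare_vec {N M n : ℕ} (hN : 2 ≤ N) (G : SimpleGraph (Fin N)) [DecidableRel G.Adj]
    (tl hd : Fin M → Fin N) (hadj : ∀ l, G.Adj (tl l) (hd l))
    (hinj : Function.Injective fun l => s(tl l, hd l))
    (y : Fin N → EuclideanSpace ℝ (Fin n)) (hy : ∑ i, y i = 0) :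
    2 * (lambda2 (incMat tl hd * (incMat tl hd)ᵀ) * ∑ i, ‖y i‖ ^ 2)
      ≤ ∑ i, ∑ j, if G.Adj i j then ‖y i - y j‖ ^ 2 else 0 := by
  have hc : ∀ k : Fin n, 2 * (lambda2 (incMat tl hd * (incMat tl hd)ᵀ) * ∑ i, (y i k) ^ 2)
      ≤ ∑ i, ∑ j, if G.Adj i j then (y i k - y j k) ^ 2 else 0 := by
    intro k
    have hk : ∑ i, y i k = 0 := by
      have := congrArg (fun z : EuclideanSpace ℝ (Fin n) => z k) hy
      simpa using this
    have h1 := poincare_edges hN tl hd (fun l => (hadj l).ne) (fun i => y i k) hk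
    have h2 := two_mul_edges_le G tl hd hadj hinj (fun i j => (y i k - y j k) ^ 2)
      (fun i j => sq_nonneg _) (fun i j => by ring)
    linarith
  have hs := Finset.sum_le_sum fun k (_ : k ∈ Finset.univ) => hc k
  rw [← Finset.mul_sum, ← Finset.mul_sum, Finset.sum_comm] at hs
  have e1 : ∑ i, ‖y i‖ ^ 2 = ∑ i, ∑ k, (y i k) ^ 2 := by
    simp [EuclideanSpace.norm_sq_eq]
  rw [e1]
  refine hs.trans (le_of_eq ?_)
  rw [Finset.sum_comm]
  refine Finset.sum_congr rfl fun i _ => ?_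
  rw [Finset.sum_comm]
  refine Finset.sum_congr rfl fun j _ => ?_
  split_ifs
  · simp [EuclideanSpace.norm_sq_eq]
  · simp

/-! ### Decay of the energy -/

/-- Summation by parts for a weighted graph Laplacian with symmetric weights `a`. -/
lemma sum_by_parts {N n : ℕ} (a : Fin N → Fin N → ℝ) (ha : ∀ i j, a i j = a j i)
    (x w : Fin N → EuclideanSpace ℝ (Fin n)) :
    ∑ i, ∑ j, a i j * inner ℝ (x i - x j) (w i - w j)
      = 2 * ∑ i, inner ℝ (∑ j, a i j • (x i - x j)) (w i) := by
  have h1 : ∑ i, inner ℝ (∑ j, a i j • (x i - x j)) (w i)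
      = ∑ i, ∑ j, a i j * inner ℝ (x i - x j) (w i) := by
    simp only [sum_inner, real_inner_smul_left]
  have h2 : ∑ i, ∑ j, a i j * inner ℝ (x i - x j) (w j)
      = -∑ i, ∑ j, a i j * inner ℝ (x i - x j) (w i) := by
    rw [Finset.sum_comm, ← Finset.sum_neg_distrib]
    refine Finset.sum_congr rfl fun i _ => ?_
    rw [← Finset.sum_neg_distrib]
    refine Finset.sum_congr rfl fun j _ => ?_
    rw [ha j i, ← neg_sub (x i) (x j), inner_neg_left]
    ring
  simp only [inner_sub_right, mul_sub, Finset.sum_sub_distrib]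
  rw [h2, h1]
  ring

/-- The weighted Laplacian dominates `r₀` times the unweighted one, hence has norm at least
`r₀ λ₂` off the consensus space; one pair at distance `m` forces a component of size `m / √2`. -/
lemma gradient_lower {N M n : ℕ} (hN : 2 ≤ N) (G : SimpleGraph (Fin N)) [DecidableRel G.Adj]
    (tl hd : Fin M → Fin N) (hadj : ∀ l, G.Adj (tl l) (hd l))
    (hinj : Function.Injective fun l => s(tl l, hd l))
    (a : Fin N → Fin N → ℝ) (ha : ∀ i j, a i j = a j i) (r₀ : ℝ) (hr₀ : 0 < r₀)
    (ha0 : ∀ i j, ¬ G.Adj i j → a i j = 0) (har : ∀ i j, G.Adj i j → r₀ ≤ a i j)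
    (x : Fin N → EuclideanSpace ℝ (Fin n)) {p q : Fin N} (hpq : x p ≠ x q) :
    r₀ ^ 2 * lambda2 (incMat tl hd * (incMat tl hd)ᵀ) ^ 2 * ‖x p - x q‖ ^ 2
      ≤ 2 * ∑ i, ‖∑ j, a i j • (x i - x j)‖ ^ 2 := by
  set lam := lambda2 (incMat tl hd * (incMat tl hd)ᵀ)
  have hlam : 0 ≤ lam := lambda2_nonneg hN (posSemidef_lap _)
  let c : EuclideanSpace ℝ (Fin n) := (N : ℝ)⁻¹ • ∑ i, x i
  let y : Fin N → EuclideanSpace ℝ (Fin n) := fun i => x i - c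
  have hNpos : (0:ℝ) < N := by exact_mod_cast (by omega : 0 < N)
  have hy : ∑ i, y i = 0 := by
    simp only [y, Finset.sum_sub_distrib, Finset.sum_const, Finset.card_univ, Fintype.card_fin, c]
    rw [← Nat.cast_smul_eq_nsmul ℝ, smul_smul, mul_inv_cancel₀ hNpos.ne', one_smul, sub_self]
  have hyx : ∀ i j, x i - x j = y i - y j := fun i j => by simp [y]
  set g : Fin N → EuclideanSpace ℝ (Fin n) := fun i => ∑ j, a i j • (x i - x j) with hg
  have hsp := sum_by_parts a ha x y
  have hP := poincare_vec hN G tl hd hadj hinj y hy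
  have h1 : r₀ * (∑ i, ∑ j, if G.Adj i j then ‖y i - y j‖ ^ 2 else 0)
      ≤ ∑ i, ∑ j, a i j * inner ℝ (x i - x j) (y i - y j) := by
    rw [Finset.mul_sum]
    refine Finset.sum_le_sum fun i _ => ?_
    rw [Finset.mul_sum]
    refine Finset.sum_le_sum fun j _ => ?_
    rw [hyx i j, real_inner_self_eq_norm_sq]
    split_ifs with h
    · exact mul_le_mul_of_nonneg_right (har i j h) (sq_nonneg _)
    · simp [ha0 i j h]
  set S := ∑ i, ‖y i‖ ^ 2 with hS
  set Gs := ∑ i, ‖g i‖ ^ 2 with hGs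
  have h2 : r₀ * lam * S ≤ ∑ i, inner ℝ (g i) (y i) := by
    have := mul_le_mul_of_nonneg_left hP hr₀.le
    have h3 := this.trans (h1.trans hsp.le)
    linarith
  have h3 : (∑ i, inner ℝ (g i) (y i)) ^ 2 ≤ Gs * S := by
    have hle : |∑ i, inner ℝ (g i) (y i)| ≤ ∑ i, ‖g i‖ * ‖y i‖ :=
      (Finset.abs_sum_le_sum_abs _ _).trans
        (Finset.sum_le_sum fun i _ => abs_real_inner_le_norm _ _)
    calc (∑ i, inner ℝ (g i) (y i)) ^ 2 = |∑ i, inner ℝ (g i) (y i)| ^ 2 := (sq_abs _).symm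
      _ ≤ (∑ i, ‖g i‖ * ‖y i‖) ^ 2 := pow_le_pow_left₀ (abs_nonneg _) hle 2
      _ ≤ _ := Finset.sum_mul_sq_le_sq_mul_sq _ _ _
  have hm : ‖x p - x q‖ ^ 2 ≤ 2 * S := by
    have hpq' : p ≠ q := fun h => hpq (by rw [h])
    have hpair : ‖y p‖ ^ 2 + ‖y q‖ ^ 2 ≤ S := by
      rw [← Finset.sum_pair (f := fun i => ‖y i‖ ^ 2) hpq']
      exact Finset.sum_le_sum_of_subset_of_nonneg (Finset.subset_univ _)
        fun i _ _ => sq_nonneg _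
    rw [hyx]
    have := norm_sub_le (y p) (y q)
    nlinarith [sq_nonneg (‖y p‖ - ‖y q‖), norm_nonneg (y p - y q), norm_nonneg (y p),
      norm_nonneg (y q)]
  have hSpos : 0 < S := by
    have : 0 < ‖x p - x q‖ := norm_pos_iff.mpr (sub_ne_zero.mpr hpq)
    have := pow_pos this 2
    linarith
  have h4 : (r₀ * lam * S) ^ 2 ≤ Gs * S :=
    (pow_le_pow_left₀ (by positivity) h2 2).trans h3
  have h5 : (r₀ * lam) ^ 2 * S ≤ Gs := by
    refine le_of_mul_le_mul_right ?_ hSpos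
    calc (r₀ * lam) ^ 2 * S * S = (r₀ * lam * S) ^ 2 := by ring
      _ ≤ _ := h4
  have h6 : 0 ≤ (r₀ * lam) ^ 2 := sq_nonneg _
  nlinarith

/-- If `|g|` is at least the size `√N δ` of the disturbance, then `⟪g, v - g⟫ ≤ 0`. -/
lemma dissipation {N n : ℕ} (g v : Fin N → EuclideanSpace ℝ (Fin n)) (δ : ℝ)
    (hv : ∀ i, ‖v i‖ ≤ δ) (hg : (N : ℝ) * δ ^ 2 ≤ ∑ i, ‖g i‖ ^ 2) :
    ∑ i, inner ℝ (g i) (-g i + v i) ≤ 0 := by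
  have h1 : ∀ i, inner ℝ (g i) (-g i + v i) ≤ (δ ^ 2 - ‖g i‖ ^ 2) / 2 := by
    intro i
    rw [inner_add_right, inner_neg_right, real_inner_self_eq_norm_sq]
    have h2 := real_inner_le_norm (g i) (v i)
    have h3 := pow_le_pow_left₀ (norm_nonneg _) (hv i) 2
    nlinarith [sq_nonneg (‖g i‖ - ‖v i‖)]
  refine (Finset.sum_le_sum fun i _ => h1 i).trans ?_
  rw [← Finset.sum_div, Finset.sum_sub_distrib, Finset.sum_const, Finset.card_univ,
    Fintype.card_fin, nsmul_eq_mul]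
  linarith

/-- The bound on `δ`, combined with `λ₂ ≤ |Dᵀ|²`, `λ₂ ≤ N ≤ 2 (N - 1)` and `r₀ ≤ r(s)`, gives
`N δ² ≤ (r₀ λ₂ s)² / 2`. A vanishing denominator in the bound would force `δ ≤ 0`. -/
lemma delta_bound (N lam d r₀ rs s δ : ℝ) (hN : 2 ≤ N) (hlam : 0 ≤ lam) (hd : 0 ≤ d)
    (hlamN : lam ≤ N) (hlamd : lam ≤ d ^ 2) (hr₀ : 0 < r₀) (hrs : r₀ ≤ rs) (hs : 0 < s)
    (hδ : 0 < δ)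
    (h : δ ≤ (1 / (2 * Real.sqrt (N * (N - 1)) * d / lam ^ 2)) * r₀ ^ 2 * (s / rs)) :
    2 * (N * δ ^ 2) ≤ r₀ ^ 2 * lam ^ 2 * s ^ 2 := by
  have hlam' : 0 < lam := by
    rcases hlam.eq_or_lt with h0 | h0
    · rw [← h0] at h; norm_num at h; linarith
    · exact h0
  have hd' : 0 < d := by
    rcases hd.eq_or_lt with h0 | h0
    · rw [← h0] at h; norm_num at h; linarith
    · exact h0
  set q := Real.sqrt (N * (N - 1)) with hq
  have hq2 : q ^ 2 = N * (N - 1) := Real.sq_sqrt (by nlinarith)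
  have hqpos : 0 < q := Real.sqrt_pos.mpr (by nlinarith)
  have hrs' : 0 < rs := hr₀.trans_le hrs
  have h1 : δ ≤ lam ^ 2 * r₀ * s / (2 * q * d) := by
    refine h.trans ?_
    have e : (1 / (2 * q * d / lam ^ 2)) * r₀ ^ 2 * (s / rs)
        = lam ^ 2 * r₀ * s / (2 * q * d) * (r₀ / rs) := by
      field_simp
    rw [e]
    exact mul_le_of_le_one_right (by positivity) ((div_le_one hrs').mpr hrs)
  have h2 : δ ^ 2 ≤ lam ^ 4 * r₀ ^ 2 * s ^ 2 / (4 * q ^ 2 * d ^ 2) := by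
    have := pow_le_pow_left₀ hδ.le h1 2
    refine this.trans (le_of_eq ?_)
    rw [div_pow]; congr 1 <;> ring
  rw [hq2, le_div_iff₀ (by have : 0 < N - 1 := by linarith
                           positivity)] at h2
  have h3 : lam ^ 2 ≤ 2 * (N - 1) * d ^ 2 := by nlinarith
  have h4 : lam ^ 4 * r₀ ^ 2 * s ^ 2 ≤ (2 * (N - 1) * d ^ 2) * (lam ^ 2 * r₀ ^ 2 * s ^ 2) := by
    have := mul_le_mul_of_nonneg_right h3 (by positivity : 0 ≤ lam ^ 2 * r₀ ^ 2 * s ^ 2)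
    linarith
  have hc : 0 < 2 * (N - 1) * d ^ 2 := by
    have : 0 < N - 1 := by linarith
    positivity
  refine le_of_mul_le_mul_left ?_ hc
  linarith

/-! ### The edge potential and the invariance argument -/

/-- The edge potential in the squared distance, so that `potential r (ρ²) = P(ρ)`. Unlike
`P ∘ ‖·‖`, its composition with `‖·‖²` is visibly differentiable at `0`. -/
noncomputable def potential (r : ℝ → ℝ) (u : ℝ) : ℝ := ∫ w in (0:ℝ)..u, r (Real.sqrt w) / 2

lemma continuous_comp_sqrt {r : ℝ → ℝ} (hr : ContinuousOn r (Set.Ici 0)) :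
    Continuous fun w => r (Real.sqrt w) / 2 :=
  (hr.comp_continuous Real.continuous_sqrt fun w => Real.sqrt_nonneg w).div_const 2

lemma hasDerivAt_potential {r : ℝ → ℝ} (hr : ContinuousOn r (Set.Ici 0)) (u : ℝ) :
    HasDerivAt (potential r) (r (Real.sqrt u) / 2) u :=
  ((continuous_comp_sqrt hr).integral_hasStrictDerivAt 0 u).hasDerivAt

lemma strictMono_potential {r : ℝ → ℝ} (hr : ContinuousOn r (Set.Ici 0))
    (hpos : ∀ s, 0 ≤ s → 0 < r s) : StrictMono (potential r) := by
  refine strictMono_of_deriv_pos fun u => ?_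
  rw [(hasDerivAt_potential hr u).deriv]
  exact half_pos (hpos _ (Real.sqrt_nonneg u))

lemma potential_sq {r : ℝ → ℝ} (hr : ContinuousOn r (Set.Ici 0)) {ρ : ℝ} (hρ : 0 ≤ ρ) :
    potential r (ρ ^ 2) = Pfun r ρ := by
  have h := intervalIntegral.integral_comp_mul_deriv (a := 0) (b := ρ)
    (f := fun s => s ^ 2) (f' := fun s => 2 * s) (g := fun w => r (Real.sqrt w) / 2)
    (fun s _ => by simpa using hasDerivAt_pow 2 s) (by fun_prop) (continuous_comp_sqrt hr)
  simp only [ne_eq, OfNat.ofNat_ne_zero, not_false_eq_true, zero_pow] at h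
  unfold potential Pfun
  rw [← h]
  refine intervalIntegral.integral_congr fun s hs => ?_
  rw [Set.uIcc_of_le hρ] at hs
  simp only [Function.comp, Real.sqrt_sq hs.1]
  ring

/-- A function that does not increase wherever it exceeds `B` never crosses the level `B`. -/
lemma barrier {W W' : ℝ → ℝ} {B T : ℝ}
    (hW : ∀ t ∈ Set.Ico (0:ℝ) T, HasDerivWithinAt W (W' t) (Set.Ico (0:ℝ) T) t)
    (h0 : W 0 ≤ B) (hW' : ∀ t ∈ Set.Ico (0:ℝ) T, B < W t → W' t ≤ 0) :
    ∀ t ∈ Set.Ico (0:ℝ) T, W t ≤ B := by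
  intro t₁ ht₁
  by_contra! hlt
  have hsub : Set.Icc 0 t₁ ⊆ Set.Ico 0 T := fun s hs => ⟨hs.1, hs.2.trans_lt ht₁.2⟩
  have hcont : ContinuousOn W (Set.Icc 0 t₁) := fun s hs =>
    (hW s (hsub hs)).continuousWithinAt.mono hsub
  have hcomp : IsCompact (Set.Icc 0 t₁ ∩ W ⁻¹' Set.Iic B) :=
    isCompact_Icc.of_isClosed_subset (hcont.preimage_isClosed_of_isClosed isClosed_Icc isClosed_Iic)
      Set.inter_subset_left
  -- the last time at which `W` is at most `B`
  obtain ⟨t₀, ⟨ht₀, hWt₀⟩, hmax⟩ := hcomp.exists_isGreatest ⟨0, ⟨le_rfl, ht₁.1⟩, h0⟩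
  have hsub' : Set.Icc t₀ t₁ ⊆ Set.Icc 0 t₁ := Set.Icc_subset_Icc_left ht₀.1
  have hder : ∀ s ∈ Set.Ioo t₀ t₁, HasDerivAt W (W' s) s := fun s hs =>
    (hW s ⟨ht₀.1.trans hs.1.le, hs.2.trans ht₁.2⟩).hasDerivAt
      (Ico_mem_nhds (ht₀.1.trans_lt hs.1) (hs.2.trans ht₁.2))
  have hanti : AntitoneOn W (Set.Icc t₀ t₁) := by
    refine antitoneOn_of_deriv_nonpos (convex_Icc _ _) (hcont.mono hsub') ?_ ?_
    · rw [interior_Icc]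
      exact fun s hs => (hder s hs).differentiableAt.differentiableWithinAt
    · rw [interior_Icc]
      intro s hs
      rw [(hder s hs).deriv]
      refine hW' s ⟨ht₀.1.trans hs.1.le, hs.2.trans ht₁.2⟩ ?_
      by_contra! hle
      exact absurd (hmax ⟨⟨ht₀.1.trans hs.1.le, hs.2.le⟩, hle⟩) (not_le.mpr hs.1)
  have := hanti ⟨le_rfl, ht₀.2⟩ ⟨ht₀.2, le_rfl⟩ ht₀.2
  exact absurd (this.trans hWt₀) (not_le.mpr hlt)

lemma sum_adj_le {N M : ℕ} (G : SimpleGraph (Fin N)) [DecidableRel G.Adj]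
    (hM : G.edgeFinset.card = M) (F : Fin N → Fin N → ℝ) (c : ℝ)
    (hF : ∀ i j, G.Adj i j → F i j ≤ c) :
    (∑ i, ∑ j, if G.Adj i j then F i j else 0) ≤ 2 * (M * c) := by
  have h1 : (∑ i, ∑ j, if G.Adj i j then F i j else 0) ≤ ∑ i, (G.degree i : ℝ) * c := by
    refine Finset.sum_le_sum fun i _ => ?_
    rw [← Finset.sum_filter, ← SimpleGraph.neighborFinset_eq_filter,
      ← SimpleGraph.card_neighborFinset_eq_degree, ← nsmul_eq_mul]
    exact Finset.sum_le_card_nsmul _ _ _ fun j hj => hF i j (by simpa using hj)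
  have h2 : (∑ i, (G.degree i : ℝ)) = 2 * M := by
    rw [← hM]
    exact_mod_cast G.sum_degrees_eq_twice_card_edges
  rw [← Finset.sum_mul, h2] at h1
  linarith

lemma two_mul_le_sum_adj {N : ℕ} (G : SimpleGraph (Fin N)) [DecidableRel G.Adj]
    (F : Fin N → Fin N → ℝ) (hF : ∀ i j, 0 ≤ F i j) (hsymm : ∀ i j, F i j = F j i)
    {p q : Fin N} (hpq : G.Adj p q) :
    2 * F p q ≤ ∑ i, ∑ j, if G.Adj i j then F i j else 0 := by
  have hn : ∀ i j, 0 ≤ if G.Adj i j then F i j else 0 := by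
    intro i j
    split_ifs
    · exact hF i j
    · exact le_rfl
  have hrow : ∀ i j, G.Adj i j → F i j ≤ ∑ j, if G.Adj i j then F i j else 0 := by
    intro i j hij
    have := Finset.single_le_sum (f := fun j => if G.Adj i j then F i j else 0)
      (fun j _ => hn i j) (Finset.mem_univ j)
    simpa [hij] using this
  have h1 := hrow p q hpq
  have h2 := hrow q p hpq.symm
  rw [hsymm q p] at h2
  have h3 := Finset.sum_le_sum_of_subset_of_nonneg
    (f := fun i => ∑ j, if G.Adj i j then F i j else 0) (Finset.subset_univ {p, q})
    (fun i _ _ => Finset.sum_nonneg fun j _ => hn i j)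
  rw [Finset.sum_pair hpq.ne] at h3
  linarith

/-- **Robust connectivity maintenance (Proposition 1).** If the agents evolve according to
`ẋ_i = -∑_{j∈N_i} r(‖x_i-x_j‖)(x_i-x_j) + v_i` on `[0,T)`, where `r` satisfies Property (P),
`‖v_i(t)‖ ≤ δ` with `δ ≤ (1/K) r(0)² s / r(s)` for all `s ≥ R̃`, `M P(R̃) ≤ P(R)`, and
initially `‖x_i(0)-x_j(0)‖ ≤ R̃` on every edge, then `‖x_i(t)-x_j(t)‖ ≤ R` on every edge
for every `t ∈ [0,T)`. -/
theorem robust_connectivity {N M n : ℕ} (hN : 2 ≤ N)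
    (G : SimpleGraph (Fin N)) [DecidableRel G.Adj] (hconn : G.Connected)
    (tl hd : Fin M → Fin N) (hadj : ∀ l, G.Adj (tl l) (hd l))
    (henum : ∀ e ∈ G.edgeSet, ∃! l : Fin M, s(tl l, hd l) = e)
    (hM : G.edgeFinset.card = M)
    (r : ℝ → ℝ) (hr_cont : ContinuousOn r (Set.Ici 0))
    (hr_mono : MonotoneOn r (Set.Ici 0)) (hr_nonneg : ∀ s ∈ Set.Ici (0:ℝ), 0 ≤ r s)
    (hr0 : 0 < r 0)
    (R R' δ T : ℝ) (hR'pos : 0 < R') (hR'R : R' < R) (hδpos : 0 < δ)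
    (hδ : ∀ s ≥ R', δ ≤ (1 / Kconst tl hd) * (r 0) ^ 2 * (s / r s))
    (hP : (M : ℝ) * Pfun r R' ≤ Pfun r R)
    (x v : Fin N → ℝ → EuclideanSpace ℝ (Fin n))
    (hdyn : ∀ i, ∀ t ∈ Set.Ico (0:ℝ) T, HasDerivWithinAt (x i)
      ((-∑ j ∈ G.neighborFinset i, r ‖x i t - x j t‖ • (x i t - x j t)) + v i t)
      (Set.Ico (0:ℝ) T) t)
    (hv : ∀ i, ∀ t ∈ Set.Ico (0:ℝ) T, ‖v i t‖ ≤ δ)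
    (hinit : ∀ i j, G.Adj i j → ‖x i 0 - x j 0‖ ≤ R') :
    ∀ t ∈ Set.Ico (0:ℝ) T, ∀ i j, G.Adj i j → ‖x i t - x j t‖ ≤ R := by
  have hinj : Function.Injective fun l => s(tl l, hd l) := by
    intro l l' h
    have hl : s(tl l', hd l') ∈ G.edgeSet := hadj l'
    exact (henum _ hl).unique h rfl
  have hrpos : ∀ s, 0 ≤ s → r 0 ≤ r s := fun s hs =>
    hr_mono (Set.mem_Ici.mpr le_rfl) (Set.mem_Ici.mpr hs) hs
  have hmono := strictMono_potential hr_cont fun s hs => hr0.trans_le (hrpos s hs)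
  let a : ℝ → Fin N → Fin N → ℝ := fun t i j => if G.Adj i j then r ‖x i t - x j t‖ else 0
  let g : ℝ → Fin N → EuclideanSpace ℝ (Fin n) := fun t i => ∑ j, a t i j • (x i t - x j t)
  have ha : ∀ t i j, a t i j = a t j i := by
    intro t i j
    simp only [a, G.adj_comm i j, norm_sub_rev (x i t) (x j t)]
  -- twice the total edge potential, as a sum over ordered pairs
  let W : ℝ → ℝ := fun t =>
    ∑ i, ∑ j, if G.Adj i j then potential r (‖x i t - x j t‖ ^ 2) else 0
  have hx : ∀ i, ∀ t ∈ Set.Ico (0:ℝ) T,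
      HasDerivWithinAt (x i) (-g t i + v i t) (Set.Ico (0:ℝ) T) t := by
    intro i t ht
    have e : g t i = ∑ j ∈ G.neighborFinset i, r ‖x i t - x j t‖ • (x i t - x j t) := by
      rw [SimpleGraph.neighborFinset_eq_filter, Finset.sum_filter]
      refine Finset.sum_congr rfl fun j _ => ?_
      simp only [a, ite_smul, zero_smul]
    rw [e]
    exact hdyn i t ht
  have hW : ∀ t ∈ Set.Ico (0:ℝ) T, HasDerivWithinAt W
      (2 * ∑ i, inner ℝ (g t i) (-g t i + v i t)) (Set.Ico (0:ℝ) T) t := by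
    intro t ht
    rw [← sum_by_parts (a t) (ha t) (fun i => x i t) (fun i => -g t i + v i t)]
    refine HasDerivWithinAt.fun_sum fun i _ => HasDerivWithinAt.fun_sum fun j _ => ?_
    by_cases hij : G.Adj i j
    · simp only [a, if_pos hij]
      have h1 := ((hx i t ht).sub (hx j t ht)).norm_sq
      have h2 := (hasDerivAt_potential hr_cont (‖x i t - x j t‖ ^ 2)).comp_hasDerivWithinAt t h1
      rw [Real.sqrt_sq (norm_nonneg _)] at h2
      refine h2.congr_deriv ?_
      simp only [Pi.sub_apply]
      ring
    · simp only [a, if_neg hij, zero_mul]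
      exact hasDerivWithinAt_const _ _ _
  have hbar := barrier (B := 2 * (M * potential r (R' ^ 2))) hW ?_ ?_
  · intro t ht i j hij
    have h1 := two_mul_le_sum_adj G (fun i j => potential r (‖x i t - x j t‖ ^ 2))
      (fun i j => by
        have := hmono.monotone (sq_nonneg ‖x i t - x j t‖)
        simpa [potential] using this)
      (fun i j => by simp only [norm_sub_rev (x i t) (x j t)]) hij
    have h2 := hbar t ht
    rw [← potential_sq hr_cont hR'pos.le,
      ← potential_sq hr_cont (hR'pos.trans hR'R).le] at hP
    have h3 : potential r (‖x i t - x j t‖ ^ 2) ≤ potential r (R ^ 2) := by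
      have := h1.trans h2
      linarith
    exact (pow_le_pow_iff_left₀ (norm_nonneg _) (hR'pos.trans hR'R).le two_ne_zero).mp
      (hmono.le_iff_le.mp h3)
  · exact sum_adj_le G hM _ _ fun i j hij =>
      hmono.monotone (pow_le_pow_left₀ (norm_nonneg _) (hinit i j hij) 2)
  · intro t ht hlt
    -- some edge is longer than `R'`
    have hex : ∃ p q, G.Adj p q ∧ R' < ‖x p t - x q t‖ := by
      by_contra! hno
      exact absurd (sum_adj_le G hM _ _ fun i j hij =>
        hmono.monotone (pow_le_pow_left₀ (norm_nonneg _) (hno i j hij) 2)) (not_le.mpr hlt)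
    obtain ⟨p, q, -, hpq⟩ := hex
    have hpos := hR'pos.trans hpq
    have hne : x p t ≠ x q t := sub_ne_zero.mp (norm_pos_iff.mp hpos)
    have hN' : (2:ℝ) ≤ N := by exact_mod_cast hN
    have h1 := delta_bound N _ _ (r 0) _ _ δ hN' (lambda2_nonneg hN (posSemidef_lap _))
      (norm_nonneg _) (lambda2_le_card hN G tl hd hadj hinj)
      (lambda2_le_opNorm_sq hN tl hd fun l => (hadj l).ne) hr0 (hrpos _ hpos.le) hpos hδpos
      (hδ _ hpq.le)
    have h2 := gradient_lower hN G tl hd hadj hinj (a t) (ha t) (r 0) hr0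
      (fun i j h => if_neg h)
      (fun i j h => by simpa only [a, if_pos h] using hrpos _ (norm_nonneg _))
      (fun i => x i t) hne
    have h3 := dissipation (g t) (fun i => v i t) δ (fun i => hv i t ht) (by
      have := h1.trans h2
      linarith)
    linarith
end

section
/- (Fact V) Let α, β, γ ∈ ℝⁿ with ‖α‖ = 1, ‖β‖ = 1, ⟨α,γ⟩ ≥ 0 and ⟨β,γ⟩ ≤ 0. Then for every λ_α, λ_β, μ_α, μ_β ≥ 0 with λ_α ≥ λ_β and μ_α ≥ μ_β, it holds ⟨μ_α·α − μ_β·β, δ̃⟩ ≥ 0, where δ̃ := λ_α·α + γ − λ_β·β. -/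
open scoped RealInnerProductSpace

/-- **Fact V.** Let `α, β, γ ∈ ℝⁿ` with `‖α‖ = 1`, `‖β‖ = 1`, `⟪α,γ⟫ ≥ 0` and `⟪β,γ⟫ ≤ 0`.
Then for every `λ_α ≥ λ_β ≥ 0` and `μ_α ≥ μ_β ≥ 0` it holds
`⟪μ_α α - μ_β β, δ̃⟫ ≥ 0`, where `δ̃ = λ_α α + γ - λ_β β`. -/
theorem fact_V {n : ℕ} (α β γ : EuclideanSpace ℝ (Fin n))
    (hα : ‖α‖ = 1) (hβ : ‖β‖ = 1) (hαγ : 0 ≤ ⟪α, γ⟫) (hβγ : ⟪β, γ⟫ ≤ 0)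
    (lα lβ mα mβ : ℝ) (hlβ : 0 ≤ lβ) (hmβ : 0 ≤ mβ) (hl : lβ ≤ lα) (hm : mβ ≤ mα) :
    0 ≤ ⟪mα • α - mβ • β, lα • α + γ - lβ • β⟫ := by
  have hc : ⟪α, β⟫ ≤ 1 := by simpa [hα, hβ] using real_inner_le_norm α β
  -- Replacing `⟪α, β⟫` by its upper bound `1` turns the `γ`-free part into
  -- `(mα - mβ) * (lα - lβ)`; the `γ`-terms are nonnegative by the sign hypotheses.
  have key : ⟪mα • α - mβ • β, lα • α + γ - lβ • β⟫
      = (mα - mβ) * (lα - lβ) + (1 - ⟪α, β⟫) * (mα * lβ + mβ * lα)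
        + mα * ⟪α, γ⟫ + mβ * (-⟪β, γ⟫) := by
    simp only [inner_sub_left, inner_sub_right, inner_add_right, real_inner_smul_left,
      real_inner_smul_right, real_inner_self_eq_norm_sq, hα, hβ, real_inner_comm α β]
    ring
  have hmα : 0 ≤ mα := hmβ.trans hm
  have hlα : 0 ≤ lα := hlβ.trans hl
  have h₁ : 0 ≤ mα - mβ := sub_nonneg.2 hm
  have h₂ : 0 ≤ lα - lβ := sub_nonneg.2 hl
  have h₃ : 0 ≤ 1 - ⟪α, β⟫ := sub_nonneg.2 hc
  have h₄ : 0 ≤ -⟪β, γ⟫ := neg_nonneg.2 hβγ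
  rw [key]
  positivity
end

section
/- Let D ∈ ℝ^{N×M}, let c > 0, and let W = diag(w₁,…,w_M) be a diagonal M×M matrix with w_i ≥ c for all i. Then the second-smallest eigenvalue (with multiplicity) of D W Dᵀ is at least c times the second-smallest eigenvalue of D Dᵀ; in particular, for the weighted Laplacian L_w := D W Dᵀ with D the incidence matrix of a graph G and L(G) = D Dᵀ, it holds λ₂(L_w) ≥ c·λ₂(G). -/
/-!
The inequality is a two-dimensional instance of the Courant-Fischer argument. Write `A = D Dᵀ` and
`B = D W Dᵀ`. As quadratic forms, `xᵀ B x = ∑ wⱼ (Dᵀ x)ⱼ² ≥ c ∑ (Dᵀ x)ⱼ² = c xᵀ A x`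
(`quadForm_weighted_ge`). The two eigenvectors of `B` with the smallest eigenvalues span a plane, and
that plane contains a nonzero vector `x` orthogonal to the eigenvector of `A` with the smallest
eigenvalue. Expanding both forms in eigenbases (`quadForm_eq_sum_eigenvalues`) gives
`xᵀ B x ≤ λ₂(B) ‖x‖²` and `λ₂(A) ‖x‖² ≤ xᵀ A x`, and the three estimates combine to the claim.
-/

open Matrix

/-- For at least two eigenvalues, `lambda2` is an eigenvalue attained at some `j`, and apart from a
single further index `i` of no larger eigenvalue, every eigenvalue is at least `lambda2`. -/
lemma lambda2_spec {N : ℕ} (hN : 2 ≤ N) {A : Matrix (Fin N) (Fin N) ℝ} (hA : A.IsHermitian) :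
    ∃ i j : Fin N, i ≠ j ∧ hA.eigenvalues i ≤ lambda2 A ∧ hA.eigenvalues j = lambda2 A ∧
      ∀ k, k ≠ i → lambda2 A ≤ hA.eigenvalues k := by
  set f := hA.eigenvalues with hf
  set σ := Tuple.sort f
  have hmono : Monotone (f ∘ σ) := Tuple.monotone_sort f
  have hlist : List.insertionSort (· ≤ ·) (List.ofFn f) = List.ofFn (f ∘ σ) := by
    apply List.Perm.eq_of_pairwise' (r := (· ≤ ·))
    · exact List.pairwise_insertionSort _ _
    · exact hmono.sortedLE_ofFn.pairwise
    · exact (List.perm_insertionSort _ _).trans (Equiv.Perm.ofFn_comp_perm σ f).symm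
  have hl : lambda2 A = f (σ ⟨1, hN⟩) := by
    have h1 : 1 < N := hN
    simp only [lambda2, hA, ← hf, hlist, dite_true]
    simp [List.getD_eq_getElem?_getD, h1]
  refine ⟨σ ⟨0, by omega⟩, σ ⟨1, hN⟩, ?_, ?_, hl.symm, ?_⟩
  · simp [σ.injective.eq_iff]
  · rw [hl]
    exact hmono (by simp)
  · intro k hk
    obtain ⟨m, rfl⟩ := σ.surjective k
    rw [hl]
    apply hmono
    rw [Fin.le_def]
    by_contra! h
    apply hk
    congr 1
    ext
    simp at h ⊢
    omega

lemma quadForm_eq_sum_eigenvalues {N : ℕ} {A : Matrix (Fin N) (Fin N) ℝ} (hA : A.IsHermitian)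
    (x : EuclideanSpace ℝ (Fin N)) :
    x.ofLp ⬝ᵥ (A *ᵥ x.ofLp) =
      ∑ k, hA.eigenvalues k * (inner ℝ (hA.eigenvectorBasis k) x) ^ 2 := by
  have h := hA.eigenvectorBasis.sum_inner_mul_inner x (WithLp.toLp 2 (A *ᵥ x.ofLp))
  have h2 : inner ℝ x (WithLp.toLp 2 (A *ᵥ x.ofLp)) = x.ofLp ⬝ᵥ (A *ᵥ x.ofLp) := by
    simp [EuclideanSpace.inner_eq_star_dotProduct, dotProduct_comm]
  rw [← h2, ← h]
  refine Finset.sum_congr rfl fun k _ => ?_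
  have hk : inner ℝ (hA.eigenvectorBasis k) (WithLp.toLp 2 (A *ᵥ x.ofLp)) =
      hA.eigenvalues k * inner ℝ (hA.eigenvectorBasis k) x := by
    have hT : Aᵀ = A := by simpa [IsHermitian] using hA
    have e := hA.mulVec_eigenvectorBasis k
    simp only [EuclideanSpace.inner_eq_star_dotProduct, star_trivial]
    rw [dotProduct_comm, dotProduct_mulVec, ← mulVec_transpose, hT, e, smul_dotProduct,
      dotProduct_comm, smul_eq_mul]
  rw [hk, real_inner_comm x]
  ring

lemma quadForm_weighted_ge {N M : ℕ} (D : Matrix (Fin N) (Fin M) ℝ)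
    (c : ℝ) (w : Fin M → ℝ) (hw : ∀ i, c ≤ w i) (x : Fin N → ℝ) :
    c * (x ⬝ᵥ ((D * Dᵀ) *ᵥ x)) ≤ x ⬝ᵥ ((D * Matrix.diagonal w * Dᵀ) *ᵥ x) := by
  rw [← mulVec_mulVec, ← mulVec_mulVec, ← mulVec_mulVec, dotProduct_mulVec, dotProduct_mulVec x D,
    ← mulVec_transpose]
  simp only [dotProduct, mulVec_diagonal, Finset.mul_sum]
  refine Finset.sum_le_sum fun j _ => ?_
  nlinarith [mul_le_mul_of_nonneg_right (hw j) (mul_self_nonneg ((Dᵀ *ᵥ x) j))]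

/-- The plane spanned by two members of an orthonormal basis contains a nonzero vector orthogonal
to any given `e`; membership in the plane is stated as vanishing of all other coordinates. -/
lemma exists_ne_zero_inner_eq_zero {N : ℕ}
    (v : OrthonormalBasis (Fin N) ℝ (EuclideanSpace ℝ (Fin N)))
    {i j : Fin N} (hij : i ≠ j) (e : EuclideanSpace ℝ (Fin N)) :
    ∃ x, x ≠ 0 ∧ inner ℝ e x = 0 ∧ ∀ k, k ≠ i → k ≠ j → inner ℝ (v k) x = 0 := by
  by_cases h : inner ℝ e (v i) = 0
  · exact ⟨v i, v.orthonormal.ne_zero i, h, fun k hk _ => v.orthonormal.2 hk⟩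
  · refine ⟨inner ℝ e (v j) • v i - inner ℝ e (v i) • v j, ?_, ?_, ?_⟩
    · intro h0
      have := congrArg (inner ℝ (v j)) h0
      simp [inner_sub_right, inner_smul_right, v.orthonormal.2 hij.symm] at this
      exact h this
    · simp only [inner_sub_right, inner_smul_right]
      ring
    · intro k hi hj
      simp [inner_sub_right, inner_smul_right, v.orthonormal.2 hi, v.orthonormal.2 hj]

/-- If `W = diag(w₁,…,w_M)` with `w_i ≥ c > 0`, then the second-smallest eigenvalue of the
weighted Laplacian `L_w = D W Dᵀ` is at least `c` times the second-smallest eigenvalue of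
`L = D Dᵀ`; in particular `λ₂(L_w) ≥ c · λ₂(G)` for `D` the incidence matrix of a graph `G`. -/
theorem lambda2_weighted_laplacian {N M : ℕ} (D : Matrix (Fin N) (Fin M) ℝ)
    (c : ℝ) (hc : 0 < c) (w : Fin M → ℝ) (hw : ∀ i, c ≤ w i) :
    c * lambda2 (D * Dᵀ) ≤ lambda2 (D * Matrix.diagonal w * Dᵀ) := by
  have hA : (D * Dᵀ).IsHermitian := by
    simp [IsHermitian, conjTranspose_eq_transpose_of_trivial]
  have hB : (D * Matrix.diagonal w * Dᵀ).IsHermitian := by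
    simp [IsHermitian, conjTranspose_eq_transpose_of_trivial, Matrix.mul_assoc]
  rcases lt_or_ge N 2 with hN | hN
  · have h1 : N ≤ 1 := by omega
    -- There is no second eigenvalue, so both sides take the default value `0`.
    simp [lambda2, List.getD_eq_getElem?_getD, h1]
  obtain ⟨p, -, -, -, -, hp⟩ := lambda2_spec hN hA
  obtain ⟨i, j, hij, hi, hj, -⟩ := lambda2_spec hN hB
  obtain ⟨x, hx0, hxe, hx⟩ :=
    exists_ne_zero_inner_eq_zero hB.eigenvectorBasis hij (hA.eigenvectorBasis p)
  have lower : lambda2 (D * Dᵀ) * ‖x‖ ^ 2 ≤ x.ofLp ⬝ᵥ ((D * Dᵀ) *ᵥ x.ofLp) := by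
    rw [quadForm_eq_sum_eigenvalues hA, ← hA.eigenvectorBasis.sum_sq_inner_right x, Finset.mul_sum]
    refine Finset.sum_le_sum fun k _ => ?_
    by_cases hk : k = p
    · simp [hk, hxe]
    · exact mul_le_mul_of_nonneg_right (hp k hk) (sq_nonneg _)
  have upper : x.ofLp ⬝ᵥ ((D * Matrix.diagonal w * Dᵀ) *ᵥ x.ofLp) ≤
      lambda2 (D * Matrix.diagonal w * Dᵀ) * ‖x‖ ^ 2 := by
    rw [quadForm_eq_sum_eigenvalues hB, ← hB.eigenvectorBasis.sum_sq_inner_right x, Finset.mul_sum]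
    refine Finset.sum_le_sum fun k _ => ?_
    by_cases hki : k = i
    · subst hki
      exact mul_le_mul_of_nonneg_right hi (sq_nonneg _)
    by_cases hkj : k = j
    · subst hkj
      exact mul_le_mul_of_nonneg_right hj.le (sq_nonneg _)
    · simp [hx k hki hkj]
  have hpos : 0 < ‖x‖ ^ 2 := by positivity
  refine le_of_mul_le_mul_right ?_ hpos
  calc c * lambda2 (D * Dᵀ) * ‖x‖ ^ 2 = c * (lambda2 (D * Dᵀ) * ‖x‖ ^ 2) := by ring
    _ ≤ c * (x.ofLp ⬝ᵥ ((D * Dᵀ) *ᵥ x.ofLp)) := mul_le_mul_of_nonneg_left lower hc.le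
    _ ≤ _ := quadForm_weighted_ge D c w hw x.ofLp
    _ ≤ _ := upper
end

section
/- The vector field g is Lipschitz continuous on the open ball D = {x ∈ ℝⁿ : ‖x‖ < 𝔯}: there exists a constant L ≥ 0 such that ‖g(x) − g(y)‖ ≤ L·‖x − y‖ for all x, y ∈ D. -/
/-!
Put `ρ = 𝔯 - ε > 0` and `p(x) = max ‖x‖ ρ`, a 1-Lipschitz function bounded below by `ρ`. Since
`h 0 = 0`, the two cases in the definition of `g` merge on the ball into
`g(x) = -cδ · h((p(x) - ρ)/ε) · (p(x)⁻¹ x)` (`gfun_eq_max`). The scalar factor is bounded by `1` and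
Lipschitz because `h` is, and `x ↦ p(x)⁻¹ x` is bounded by `1` and `2/ρ`-Lipschitz
(`norm_inv_max_smul_sub_le`), so the product is Lipschitz.
-/

/-- The repulsive vector field: `g(x) = -cδ h((ε+‖x‖-𝔯)/ε) x/‖x‖` on
`N_ε = {𝔯-ε ≤ ‖x‖ < 𝔯}` and `g(x) = 0` on `D_ε = {‖x‖ < 𝔯-ε}`. -/
noncomputable def gfun {n : ℕ} (c δ ε 𝔯 : ℝ) (h : ℝ → ℝ)
    (x : EuclideanSpace ℝ (Fin n)) : EuclideanSpace ℝ (Fin n) :=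
  if 𝔯 - ε ≤ ‖x‖ then (-(c * δ * h ((ε + ‖x‖ - 𝔯) / ε) / ‖x‖)) • x else 0

/-- On both regions `g` is given by one formula in `max ‖x‖ (𝔯 - ε)`: on the inner ball this maximum
equals `𝔯 - ε`, and `h 0 = 0`. -/
lemma gfun_eq_max {n : ℕ} (c δ ε 𝔯 : ℝ) (h : ℝ → ℝ) (hh0 : h 0 = 0)
    (x : EuclideanSpace ℝ (Fin n)) :
    gfun c δ ε 𝔯 h x = (-(c * δ)) • (h ((max ‖x‖ (𝔯 - ε) - (𝔯 - ε)) / ε) •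
      ((max ‖x‖ (𝔯 - ε))⁻¹ • x)) := by
  unfold gfun
  split_ifs with hx
  · rw [max_eq_left hx, smul_smul, smul_smul,
      show ‖x‖ - (𝔯 - ε) = ε + ‖x‖ - 𝔯 by ring]
    congr 1
    ring
  · rw [max_eq_right (not_le.mp hx).le]
    simp [hh0]

lemma norm_inv_max_smul_le {E : Type*} [NormedAddCommGroup E] [NormedSpace ℝ E]
    {ρ : ℝ} (hρ : 0 < ρ) (x : E) : ‖(max ‖x‖ ρ)⁻¹ • x‖ ≤ 1 := by
  have hp : 0 < max ‖x‖ ρ := lt_max_of_lt_right hρ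
  rw [norm_smul, Real.norm_of_nonneg (inv_nonneg.mpr hp.le), inv_mul_le_iff₀ hp, mul_one]
  exact le_max_left _ _

lemma abs_max_norm_sub_le {E : Type*} [NormedAddCommGroup E] (ρ : ℝ) (x y : E) :
    |max ‖x‖ ρ - max ‖y‖ ρ| ≤ ‖x - y‖ :=
  (abs_max_sub_max_le_abs _ _ _).trans (abs_norm_sub_norm_le x y)

/-- With `p = max ‖x‖ ρ` and `q = max ‖y‖ ρ`, this follows from
`p⁻¹ x - q⁻¹ y = p⁻¹ (x - y) + p⁻¹ (q - p) (q⁻¹ y)`. -/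
lemma norm_inv_max_smul_sub_le {E : Type*} [NormedAddCommGroup E] [NormedSpace ℝ E]
    {ρ : ℝ} (hρ : 0 < ρ) (x y : E) :
    ‖(max ‖x‖ ρ)⁻¹ • x - (max ‖y‖ ρ)⁻¹ • y‖ ≤ 2 / ρ * ‖x - y‖ := by
  have hv := norm_inv_max_smul_le hρ y
  have hpq := abs_max_norm_sub_le ρ y x
  have hρp : ρ ≤ max ‖x‖ ρ := le_max_right _ _
  have hq : 0 < max ‖y‖ ρ := lt_max_of_lt_right hρ
  set p := max ‖x‖ ρ
  set q := max ‖y‖ ρ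
  have hp : 0 < p := hρ.trans_le hρp
  have hpi : p⁻¹ ≤ ρ⁻¹ := inv_anti₀ hρ hρp
  have key : p⁻¹ • x - q⁻¹ • y = p⁻¹ • ((x - y) + (q - p) • (q⁻¹ • y)) := by
    have : p⁻¹ * ((q - p) * q⁻¹) = p⁻¹ - q⁻¹ := by field_simp
    rw [smul_add, smul_smul, smul_smul, mul_assoc, this, smul_sub, sub_smul]
    abel
  have hsum : ‖(x - y) + (q - p) • (q⁻¹ • y)‖ ≤ 2 * ‖x - y‖ := by
    have h2 : ‖(q - p) • (q⁻¹ • y)‖ ≤ ‖x - y‖ := by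
      rw [norm_smul, Real.norm_eq_abs]
      rw [norm_sub_rev] at hpq
      exact (mul_le_of_le_one_right (abs_nonneg _) hv).trans hpq
    linarith [norm_add_le (x - y) ((q - p) • (q⁻¹ • y))]
  rw [key, norm_smul, Real.norm_of_nonneg (inv_nonneg.mpr hp.le)]
  calc p⁻¹ * _ ≤ ρ⁻¹ * (2 * ‖x - y‖) := by gcongr
    _ = 2 / ρ * ‖x - y‖ := by ring

/-- The vector field `g` is Lipschitz continuous on the open ball `D = {‖x‖ < 𝔯}`. -/
theorem g_lipschitz {n : ℕ} (ε 𝔯 c δ : ℝ) (hε : 0 < ε) (hε𝔯 : ε < 𝔯)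
    (hc : 0 < c) (hδ : 0 < δ) (h : ℝ → ℝ)
    (hh_lip : ∃ L : NNReal, LipschitzOnWith L h (Set.Icc 0 1))
    (hh0 : h 0 = 0) (hh1 : h 1 = 1) (hh_mono : StrictMonoOn h (Set.Icc 0 1))
    (hh_range : ∀ s ∈ Set.Icc (0:ℝ) 1, h s ∈ Set.Icc (0:ℝ) 1) :
    ∃ L : ℝ, 0 ≤ L ∧ ∀ x y : EuclideanSpace ℝ (Fin n), ‖x‖ < 𝔯 → ‖y‖ < 𝔯 →
      ‖gfun c δ ε 𝔯 h x - gfun c δ ε 𝔯 h y‖ ≤ L * ‖x - y‖ := by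
  obtain ⟨K, hK⟩ := hh_lip
  have hρ : 0 < 𝔯 - ε := sub_pos.mpr hε𝔯
  have hmem : ∀ x : EuclideanSpace ℝ (Fin n), ‖x‖ < 𝔯 →
      (max ‖x‖ (𝔯 - ε) - (𝔯 - ε)) / ε ∈ Set.Icc (0 : ℝ) 1 := by
    intro x hx
    constructor
    · exact div_nonneg (sub_nonneg.mpr (le_max_right _ _)) hε.le
    · rw [div_le_one hε, sub_le_iff_le_add]
      exact max_le (by linarith) (by linarith)
  refine ⟨c * δ * (K / ε + 2 / (𝔯 - ε)), by positivity, fun x y hx hy => ?_⟩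
  have hab := hK.dist_le_mul _ (hmem x hx) _ (hmem y hy)
  have hb := hh_range _ (hmem y hy)
  have hpq := abs_max_norm_sub_le (𝔯 - ε) x y
  have hu := norm_inv_max_smul_le hρ x
  have huv := norm_inv_max_smul_sub_le hρ x y
  rw [Real.dist_eq, Real.dist_eq, ← sub_div, sub_sub_sub_cancel_right, abs_div,
    abs_of_pos hε] at hab
  rw [gfun_eq_max _ _ _ _ _ hh0, gfun_eq_max _ _ _ _ _ hh0, ← smul_sub, norm_smul, norm_neg,
    Real.norm_of_nonneg (by positivity : 0 ≤ c * δ), mul_assoc (c * δ)]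
  generalize h ((max ‖x‖ (𝔯 - ε) - (𝔯 - ε)) / ε) = a at *
  generalize h ((max ‖y‖ (𝔯 - ε) - (𝔯 - ε)) / ε) = b at *
  generalize (max ‖x‖ (𝔯 - ε))⁻¹ • x = u at *
  generalize (max ‖y‖ (𝔯 - ε))⁻¹ • y = v at *
  have hab' : |a - b| ≤ K / ε * ‖x - y‖ := by
    refine hab.trans ?_
    rw [div_mul_eq_mul_div, ← mul_div_assoc]
    gcongr
  have hsplit : a • u - b • v = (a - b) • u + b • (u - v) := by
    rw [sub_smul, smul_sub]
    abel
  gcongr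
  calc ‖a • u - b • v‖ ≤ |a - b| * ‖u‖ + b * ‖u - v‖ := by
        rw [hsplit]
        refine (norm_add_le _ _).trans_eq ?_
        rw [norm_smul, norm_smul, Real.norm_eq_abs, Real.norm_of_nonneg hb.1]
    _ ≤ |a - b| + ‖u - v‖ := add_le_add (mul_le_of_le_one_right (abs_nonneg _) hu)
        (mul_le_of_le_one_left (norm_nonneg _) hb.2)
    _ ≤ (K / ε + 2 / (𝔯 - ε)) * ‖x - y‖ := by linarith
end

section
/- For every x ∈ N_ε and y ∈ D_ε it holds ⟨x − y, g(x)⟩ ≤ 0, and for every pair x, y ∈ N_ε it holds ⟨x − y, g(x)⟩ + ⟨y − x, g(y)⟩ ≤ 0. -/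
/-!
The field `g` points radially inwards with strength `a(x) = cδ h((ε+‖x‖-𝔯)/ε) ≥ 0`, so by
Cauchy–Schwarz `⟪x - y, g(x)⟫ ≤ -a(x) (‖x‖ - ‖y‖)` for `x ∈ N_ε` and every `y`
(`inner_sub_radial_le`). For `y ∈ D_ε` the right-hand side is nonpositive because `‖y‖ < ‖x‖`.
For `x, y ∈ N_ε` the two bounds add up to `-(a(x) - a(y)) (‖x‖ - ‖y‖)`, which is nonpositive
because `a` is a monotone function of the norm.
-/

open scoped RealInnerProductSpace

/-- Reduces the claim to norms: an inward radial vector of length `a` at `x`, paired with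
`x - y`, is controlled by `‖x‖ - ‖y‖` alone. -/
theorem inner_sub_radial_le {n : ℕ} {a : ℝ} (ha : 0 ≤ a) (x y : EuclideanSpace ℝ (Fin n))
    (hx : 0 < ‖x‖) : ⟪x - y, (-(a / ‖x‖)) • x⟫ ≤ -(a * (‖x‖ - ‖y‖)) := by
  rw [real_inner_smul_right, inner_sub_left, real_inner_self_eq_norm_sq]
  have hcs : a / ‖x‖ * ⟪y, x⟫ ≤ a / ‖x‖ * (‖y‖ * ‖x‖) :=
    mul_le_mul_of_nonneg_left (real_inner_le_norm y x) (by positivity)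
  have h1 : a / ‖x‖ * (‖y‖ * ‖x‖) = a * ‖y‖ := by field_simp
  have h2 : a / ‖x‖ * ‖x‖ ^ 2 = a * ‖x‖ := by field_simp
  linarith

/-- For `x ∈ N_ε` and `y ∈ D_ε` it holds `⟪x - y, g(x)⟫ ≤ 0`; and for `x, y ∈ N_ε`
it holds `⟪x - y, g(x)⟫ + ⟪y - x, g(y)⟫ ≤ 0`. -/
theorem g_dissipative {n : ℕ} (ε 𝔯 c δ : ℝ) (hε : 0 < ε) (hε𝔯 : ε < 𝔯)
    (hc : 0 < c) (hδ : 0 < δ) (h : ℝ → ℝ)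
    (hh_lip : ∃ L : NNReal, LipschitzOnWith L h (Set.Icc 0 1))
    (hh0 : h 0 = 0) (hh1 : h 1 = 1) (hh_mono : StrictMonoOn h (Set.Icc 0 1))
    (hh_range : ∀ s ∈ Set.Icc (0:ℝ) 1, h s ∈ Set.Icc (0:ℝ) 1) :
    (∀ x y : EuclideanSpace ℝ (Fin n), 𝔯 - ε ≤ ‖x‖ → ‖x‖ < 𝔯 → ‖y‖ < 𝔯 - ε →
      ⟪x - y, gfun c δ ε 𝔯 h x⟫ ≤ 0) ∧
    (∀ x y : EuclideanSpace ℝ (Fin n), 𝔯 - ε ≤ ‖x‖ → ‖x‖ < 𝔯 → 𝔯 - ε ≤ ‖y‖ → ‖y‖ < 𝔯 →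
      ⟪x - y, gfun c δ ε 𝔯 h x⟫ + ⟪y - x, gfun c δ ε 𝔯 h y⟫ ≤ 0) := by
  have hmem : ∀ t : ℝ, 𝔯 - ε ≤ t → t < 𝔯 → (ε + t - 𝔯) / ε ∈ Set.Icc (0:ℝ) 1 :=
    fun t h1 h2 => ⟨div_nonneg (by linarith) hε.le, (div_le_one hε).2 (by linarith)⟩
  have hbound : ∀ x y : EuclideanSpace ℝ (Fin n), 𝔯 - ε ≤ ‖x‖ → ‖x‖ < 𝔯 →
      ⟪x - y, gfun c δ ε 𝔯 h x⟫ ≤ -(c * δ * h ((ε + ‖x‖ - 𝔯) / ε) * (‖x‖ - ‖y‖)) := by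
    intro x y h1 h2
    rw [gfun, if_pos h1]
    exact inner_sub_radial_le
      (mul_nonneg (mul_pos hc hδ).le (hh_range _ (hmem _ h1 h2)).1) x y (by linarith)
  refine ⟨fun x y hx1 hx2 hy => (hbound x y hx1 hx2).trans ?_, fun x y hx1 hx2 hy1 hy2 => ?_⟩
  · exact neg_nonpos.2 (mul_nonneg
      (mul_nonneg (mul_pos hc hδ).le (hh_range _ (hmem _ hx1 hx2)).1) (by linarith))
  · have key : 0 ≤ (h ((ε + ‖x‖ - 𝔯) / ε) - h ((ε + ‖y‖ - 𝔯) / ε)) * (‖x‖ - ‖y‖) := by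
      rcases le_total ‖x‖ ‖y‖ with hxy | hxy
      · have := hh_mono.monotoneOn (hmem _ hx1 hx2) (hmem _ hy1 hy2)
          (div_le_div_of_nonneg_right (by linarith) hε.le)
        exact mul_nonneg_of_nonpos_of_nonpos (by linarith) (by linarith)
      · have := hh_mono.monotoneOn (hmem _ hy1 hy2) (hmem _ hx1 hx2)
          (div_le_div_of_nonneg_right (by linarith) hε.le)
        exact mul_nonneg (by linarith) (by linarith)
    have := mul_nonneg (mul_pos hc hδ).le key
    linarith [hbound x y hx1 hx2, hbound y x hy1 hy2]
end
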